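/- Let K = Z_2 be the field with two elements. For every (n,m) ∈ {(1,1), (1,2), (1,3), (1,4), (1,5), (2,2), (2,3), (2,4), (3,3)}, the flip graph of the polynomial multiplication tensor T_{n,m} over K has a path (consisting of flips and reductions) from the standard representation {(a_i, b_j, c_{i+j}) : 0 ≤ i ≤ n, 0 ≤ j ≤ m} to a representation whose length equals the rank of T_{n,m} over K. -/

import Mathlib

open Polynomial TensorProduct

namespace FlipGraph

variable (K : Type) [Field K]

/-- A triple `(u, v, w)` of polynomials, standing for the rank-one tensor `u ⊗ v ⊗ w`. -/
abbrev Triple := Polynomial K × Polynomial K × Polynomial K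

/-- The rank-one tensor `u ⊗ v ⊗ w` represented by a triple. -/
noncomputable def tensorOf (t : Triple K) :
    TensorProduct K (Polynomial K) (TensorProduct K (Polynomial K) (Polynomial K)) :=
  t.1 ⊗ₜ[K] (t.2.1 ⊗ₜ[K] t.2.2)

/-- The tensor represented by a representation (a multiset of triples). -/
noncomputable def tensorOfRep (S : Multiset (Triple K)) :
    TensorProduct K (Polynomial K) (TensorProduct K (Polynomial K) (Polynomial K)) :=
  (S.map (tensorOf K)).sum

/-- Two representations are equivalent up to rescaling: each triple is replaced by another
triple representing the same rank-one tensor (nonzero scalar factors being moved between the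
three components). Such rescalings are not counted as steps. -/
def ReEq (S S' : Multiset (Triple K)) : Prop :=
  S.map (tensorOf K) = S'.map (tensorOf K)

/-- A flip replaces two triples that agree in one position by two new triples: for a shared
first component and any `l ∈ K`, `(u, v₁, w₁), (u, v₂, w₂) ↦ (u, v₁ − l·v₂, w₁),
(u, v₂, w₂ + l·w₁)`, and analogously when the shared component is the second or the third. -/
def IsFlip (S S' : Multiset (Triple K)) : Prop :=
  ∃ (T : Multiset (Triple K)) (l : K),
    (∃ u v₁ w₁ v₂ w₂, S = (u, v₁, w₁) ::ₘ (u, v₂, w₂) ::ₘ T ∧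
        S' = (u, v₁ - l • v₂, w₁) ::ₘ (u, v₂, w₂ + l • w₁) ::ₘ T) ∨
    (∃ v u₁ w₁ u₂ w₂, S = (u₁, v, w₁) ::ₘ (u₂, v, w₂) ::ₘ T ∧
        S' = (u₁ - l • u₂, v, w₁) ::ₘ (u₂, v, w₂ + l • w₁) ::ₘ T) ∨
    (∃ w u₁ v₁ u₂ v₂, S = (u₁, v₁, w) ::ₘ (u₂, v₂, w) ::ₘ T ∧
        S' = (u₁ - l • u₂, v₁, w) ::ₘ (u₂, v₂ + l • v₁, w) ::ₘ T)

/-- A reduction replaces two triples that agree in two positions by their sum in the remaining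
position, e.g. `(u₁, v, w), (u₂, v, w) ↦ (u₁ + u₂, v, w)`. -/
def IsReduction (S S' : Multiset (Triple K)) : Prop :=
  ∃ T : Multiset (Triple K),
    (∃ u₁ u₂ v w, S = (u₁, v, w) ::ₘ (u₂, v, w) ::ₘ T ∧ S' = (u₁ + u₂, v, w) ::ₘ T) ∨
    (∃ u v₁ v₂ w, S = (u, v₁, w) ::ₘ (u, v₂, w) ::ₘ T ∧ S' = (u, v₁ + v₂, w) ::ₘ T) ∨
    (∃ u v w₁ w₂, S = (u, v, w₁) ::ₘ (u, v, w₂) ::ₘ T ∧ S' = (u, v, w₁ + w₂) ::ₘ T)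

/-- `Path K S S' f r` means that in the flip graph there is a path from representation `S` to
representation `S'` consisting of `f` flips and `r` reductions (interleaved with arbitrarily
many uncounted rescalings). -/
inductive Path : Multiset (Triple K) → Multiset (Triple K) → ℕ → ℕ → Prop
  | refl (S : Multiset (Triple K)) : Path S S 0 0
  | rescale {S S' T : Multiset (Triple K)} {f r : ℕ} :
      ReEq K S S' → Path S' T f r → Path S T f r
  | flip {S S' T : Multiset (Triple K)} {f r : ℕ} :
      IsFlip K S S' → Path S' T f r → Path S T (f + 1) r
  | reduce {S S' T : Multiset (Triple K)} {f r : ℕ} :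
      IsReduction K S S' → Path S' T f r → Path S T f (r + 1)

/-- The standard representation of the polynomial multiplication tensor `T_{n,m}`:
the multiset of triples `(a_i, b_j, c_{i+j})` for `0 ≤ i ≤ n`, `0 ≤ j ≤ m`. -/
noncomputable def stdRep (n m : ℕ) : Multiset (Triple K) :=
  (Finset.range (n + 1) ×ˢ Finset.range (m + 1)).val.map
    fun p => ((X : Polynomial K) ^ p.1, (X : Polynomial K) ^ p.2,
              (X : Polynomial K) ^ (p.1 + p.2))

end FlipGraph

open FlipGraph

/-- The rank of the polynomial multiplication tensor `T_{n,m}` over the field `K`: the least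
`r` such that `T_{n,m} = ∑_{ℓ=1}^r u_ℓ ⊗ v_ℓ ⊗ w_ℓ` for polynomials with `deg u_ℓ ≤ n`,
`deg v_ℓ ≤ m`, `deg w_ℓ ≤ n+m`. -/
noncomputable def polyMulRank (K : Type) [Field K] (n m : ℕ) : ℕ :=
  sInf {r : ℕ | ∃ u v w : Fin r → Polynomial K,
    (∀ l, (u l).degree ≤ (n : ℕ)) ∧
    (∀ l, (v l).degree ≤ (m : ℕ)) ∧
    (∀ l, (w l).degree ≤ ((n + m : ℕ))) ∧
    ∑ l, (u l) ⊗ₜ[K] ((v l) ⊗ₜ[K] (w l))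
      = ∑ i ∈ Finset.range (n + 1), ∑ j ∈ Finset.range (m + 1),
          ((X : Polynomial K) ^ i) ⊗ₜ[K]
            (((X : Polynomial K) ^ j) ⊗ₜ[K] ((X : Polynomial K) ^ (i + j)))}

/-!
Over any field, flips followed by a reduction carry out Karatsuba's trick on four triples
`(u₁, v₁, w₁), (u₁, v₂, w), (u₂, v₁, w), (u₂, v₂, w₂)` and so save one of them. Applied to blocks,
and for `(2, 4)` together with two larger moves of the same kind, this yields the short
representations.

For the lower bounds, a decomposition with `r` triples is read as an algorithm with `r`
multiplications. The values of its left linear forms at `p` are a word of length `r`. Since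
multiplication by `p ≠ 0` is injective on the polynomials of degree at most `m`, this word has
weight at least `m + 1`, and the Griesmer bound for linear codes bounds `r` from below.

Over `ZMod 2` the Griesmer bound falls short by one for `(2, 3)` and `(3, 3)`. If the words of three
independent polynomials had a joint support of the least possible size `7 (m + 1) / 4`, then all
their combinations would have weight `m + 1` and some position would lie in all three supports. But
a word of weight `m + 1` forces the output of each multiplication in its support to be a multiple of
its polynomial, and when the three polynomials are coprime no output has so large a degree. For
`(3, 3)` this strict inequality excludes `r = 8` once some position is missed by three of five
suitable words. Otherwise the pairwise distances of these words require `r ≥ 10`.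
-/

namespace FlipGraph

open Multiset (insert_eq_cons singleton_add)

section Reaches

variable {K : Type} [Field K] {S S' S'' T T' : Multiset (Triple K)}

lemma tensorOfRep_cons (t : Triple K) (S : Multiset (Triple K)) :
    tensorOfRep K (t ::ₘ S) = tensorOf K t + tensorOfRep K S := by
  simp only [tensorOfRep, Multiset.map_cons, Multiset.sum_cons]

lemma IsFlip.tensorOfRep_eq (h : IsFlip K S S') : tensorOfRep K S = tensorOfRep K S' := by
  obtain ⟨T, l, ⟨_, _, _, _, _, rfl, rfl⟩ | ⟨_, _, _, _, _, rfl, rfl⟩ |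
    ⟨_, _, _, _, _, rfl, rfl⟩⟩ := h <;>
  · simp only [tensorOfRep_cons, tensorOf, tmul_add, tmul_sub, sub_tmul, add_tmul, ← smul_tmul',
      tmul_smul]
    abel

lemma IsReduction.tensorOfRep_eq (h : IsReduction K S S') :
    tensorOfRep K S = tensorOfRep K S' := by
  obtain ⟨T, ⟨_, _, _, _, rfl, rfl⟩ | ⟨_, _, _, _, rfl, rfl⟩ | ⟨_, _, _, _, rfl, rfl⟩⟩ := h <;>
  · simp only [tensorOfRep_cons, tensorOf, tmul_add, add_tmul]
    abel

lemma Path.tensorOfRep_eq {f r : ℕ} (h : Path K S S' f r) :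
    tensorOfRep K S = tensorOfRep K S' := by
  induction h with
  | refl => rfl
  | rescale h _ ih => exact (congrArg Multiset.sum h).trans ih
  | flip h _ ih => exact h.tensorOfRep_eq.trans ih
  | reduce h _ ih => exact h.tensorOfRep_eq.trans ih

lemma Path.trans {f r f' r' : ℕ} (h : Path K S S' f r) (h' : Path K S' S'' f' r') :
    Path K S S'' (f + f') (r + r') := by
  induction h with
  | refl => simpa only [zero_add] using h'
  | rescale h _ ih => exact .rescale h (ih h')
  | flip h _ ih => simpa only [Nat.add_right_comm _ 1] using Path.flip h (ih h')
  | reduce h _ ih => simpa only [Nat.add_right_comm _ 1] using Path.reduce h (ih h')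

lemma ReEq.add_right (h : ReEq K S S') (T : Multiset (Triple K)) :
    ReEq K (S + T) (S' + T) := by
  rw [ReEq, Multiset.map_add, Multiset.map_add, h]

lemma IsFlip.add_right (h : IsFlip K S S') (T : Multiset (Triple K)) :
    IsFlip K (S + T) (S' + T) := by
  obtain ⟨U, l, h⟩ := h
  refine ⟨U + T, l, ?_⟩
  rcases h with ⟨_, _, _, _, _, rfl, rfl⟩ | ⟨_, _, _, _, _, rfl, rfl⟩ |
    ⟨_, _, _, _, _, rfl, rfl⟩ <;> simp only [Multiset.cons_add]
  · exact Or.inl ⟨_, _, _, _, _, rfl, rfl⟩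
  · exact Or.inr (Or.inl ⟨_, _, _, _, _, rfl, rfl⟩)
  · exact Or.inr (Or.inr ⟨_, _, _, _, _, rfl, rfl⟩)

lemma IsReduction.add_right (h : IsReduction K S S') (T : Multiset (Triple K)) :
    IsReduction K (S + T) (S' + T) := by
  obtain ⟨U, h⟩ := h
  refine ⟨U + T, ?_⟩
  rcases h with ⟨_, _, _, _, rfl, rfl⟩ | ⟨_, _, _, _, rfl, rfl⟩ | ⟨_, _, _, _, rfl, rfl⟩ <;>
    simp only [Multiset.cons_add]
  · exact Or.inl ⟨_, _, _, _, rfl, rfl⟩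
  · exact Or.inr (Or.inl ⟨_, _, _, _, rfl, rfl⟩)
  · exact Or.inr (Or.inr ⟨_, _, _, _, rfl, rfl⟩)

lemma Path.add_right {f r : ℕ} (h : Path K S S' f r) (T : Multiset (Triple K)) :
    Path K (S + T) (S' + T) f r := by
  induction h with
  | refl => exact .refl _
  | rescale h _ ih => exact .rescale (h.add_right T) ih
  | flip h _ ih => exact .flip (h.add_right T) ih
  | reduce h _ ih => exact .reduce (h.add_right T) ih

/-- `Reaches S S'` means that the flip graph has a path of any length from `S` to `S'`. -/
def Reaches (S S' : Multiset (Triple K)) : Prop :=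
  ∃ f r, Path K S S' f r

namespace Reaches

@[refl]
lemma refl (S : Multiset (Triple K)) : Reaches S S :=
  ⟨0, 0, .refl S⟩

@[trans]
lemma trans (h : Reaches S S') (h' : Reaches S' S'') : Reaches S S'' := by
  obtain ⟨f, r, h⟩ := h
  obtain ⟨f', r', h'⟩ := h'
  exact ⟨_, _, Path.trans h h'⟩

instance : Trans (Reaches (K := K)) Reaches Reaches :=
  ⟨trans⟩

lemma add_right (h : Reaches S S') (T : Multiset (Triple K)) : Reaches (S + T) (S' + T) := by
  obtain ⟨f, r, h⟩ := h
  exact ⟨f, r, Path.add_right h T⟩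

lemma add (h : Reaches S S') (h' : Reaches T T') : Reaches (S + T) (S' + T') := by
  refine (h.add_right T).trans ?_
  rw [add_comm S', add_comm S']
  exact h'.add_right S'

lemma of_reEq (h : ReEq K S S') : Reaches S S' :=
  ⟨0, 0, .rescale h (.refl S')⟩

lemma of_isFlip (h : IsFlip K S S') : Reaches S S' :=
  ⟨1, 0, .flip h (.refl S')⟩

lemma of_isReduction (h : IsReduction K S S') : Reaches S S' :=
  ⟨0, 1, .reduce h (.refl S')⟩

end Reaches

variable (u u' u₁ u₂ v v₁ v₂ w w₁ w₂ : K[X])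

lemma flip_fst : Reaches {(u, v₁, w₁), (u, v₂, w₂)} {(u, v₁ + v₂, w₁), (u, v₂, w₂ - w₁)} := by
  have h : IsFlip K {(u, v₁, w₁), (u, v₂, w₂)}
      {(u, v₁ - (-1 : K) • v₂, w₁), (u, v₂, w₂ + (-1 : K) • w₁)} :=
    ⟨0, -1, Or.inl ⟨_, _, _, _, _, rfl, rfl⟩⟩
  simpa only [neg_one_smul, sub_neg_eq_add, ← sub_eq_add_neg] using Reaches.of_isFlip h

lemma flip_snd : Reaches {(u₁, v, w₁), (u₂, v, w₂)} {(u₁ + u₂, v, w₁), (u₂, v, w₂ - w₁)} := by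
  have h : IsFlip K {(u₁, v, w₁), (u₂, v, w₂)}
      {(u₁ - (-1 : K) • u₂, v, w₁), (u₂, v, w₂ + (-1 : K) • w₁)} :=
    ⟨0, -1, Or.inr (Or.inl ⟨_, _, _, _, _, rfl, rfl⟩)⟩
  simpa only [neg_one_smul, sub_neg_eq_add, ← sub_eq_add_neg] using Reaches.of_isFlip h

lemma flip_thd : Reaches {(u₁, v₁, w), (u₂, v₂, w)} {(u₁ + u₂, v₁, w), (u₂, v₂ - v₁, w)} := by
  have h : IsFlip K {(u₁, v₁, w), (u₂, v₂, w)}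
      {(u₁ - (-1 : K) • u₂, v₁, w), (u₂, v₂ + (-1 : K) • v₁, w)} :=
    ⟨0, -1, Or.inr (Or.inr ⟨_, _, _, _, _, rfl, rfl⟩)⟩
  simpa only [neg_one_smul, sub_neg_eq_add, ← sub_eq_add_neg] using Reaches.of_isFlip h

lemma reduce_fst : Reaches {(u₁, v, w), (u₂, v, w)} {(u₁ + u₂, v, w)} :=
  .of_isReduction ⟨0, Or.inl ⟨_, _, _, _, rfl, rfl⟩⟩

lemma reduce_snd_neg : Reaches {(u, v₁, w), (u, v₂, -w)} {(u, v₁ - v₂, w)} := by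
  have h : ReEq K {(u, v₁, w), (u, v₂, -w)} {(u, v₁, w), (u, -v₂, w)} := by
    simp [ReEq, tensorOf, tmul_neg, neg_tmul]
  rw [sub_eq_add_neg]
  exact (Reaches.of_reEq h).trans
    (.of_isReduction ⟨0, Or.inr (Or.inl ⟨_, _, _, _, rfl, rfl⟩)⟩)

lemma reduce_thd_neg : Reaches {(u, v, w₁), (u, -v, w₂)} {(u, v, w₁ - w₂)} := by
  have h : ReEq K {(u, v, w₁), (u, -v, w₂)} {(u, v, w₁), (u, v, -w₂)} := by
    simp [ReEq, tensorOf, tmul_neg, neg_tmul]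
  rw [sub_eq_add_neg]
  exact (Reaches.of_reEq h).trans
    (.of_isReduction ⟨0, Or.inr (Or.inr ⟨_, _, _, _, rfl, rfl⟩)⟩)

lemma karatsuba :
    Reaches {(u₁, v₁, w₁), (u₁, v₂, w), (u₂, v₁, w), (u₂, v₂, w₂)}
      {(u₁, v₁, w₁ - w), (u₂, v₂, w₂ - w), (u₁ + u₂, v₁ + v₂, w)} := by
  calc ({(u₁, v₁, w₁), (u₁, v₂, w), (u₂, v₁, w), (u₂, v₂, w₂)} : Multiset (Triple K))
    _ = {(u₁, v₂, w), (u₁, v₁, w₁)} + {(u₂, v₁, w), (u₂, v₂, w₂)} := by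
      simp only [insert_eq_cons, ← singleton_add]
      abel
    Reaches _ ({(u₁, v₂ + v₁, w), (u₁, v₁, w₁ - w)} + {(u₂, v₁ + v₂, w), (u₂, v₂, w₂ - w)}) :=
      (flip_fst ..).add (flip_fst ..)
    _ = {(u₁, v₁ + v₂, w), (u₂, v₁ + v₂, w)} + {(u₁, v₁, w₁ - w), (u₂, v₂, w₂ - w)} := by
      simp only [insert_eq_cons, ← singleton_add, add_comm v₂ v₁]
      abel
    Reaches _ ({(u₁ + u₂, v₁ + v₂, w)} + {(u₁, v₁, w₁ - w), (u₂, v₂, w₂ - w)}) :=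
      (reduce_fst ..).add_right _
    _ = _ := by
      simp only [insert_eq_cons, ← singleton_add]
      abel

lemma reduce_column_pair (u₀ v' : K[X]) :
    Reaches {(u₀, v', w₁), (u₁, v', w₂), (u₁, v, w₁ - w), (u₂, v, w₂ - w)}
      {(u₂ + u₁, v, w₂ - w), (u₁, v - v', w₁ - w₂), (u₀ + u₁, v', w₁)} := by
  calc ({(u₀, v', w₁), (u₁, v', w₂), (u₁, v, w₁ - w), (u₂, v, w₂ - w)} : Multiset (Triple K))
    _ = {(u₀, v', w₁), (u₁, v', w₂)} + {(u₂, v, w₂ - w), (u₁, v, w₁ - w)} := by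
      simp only [insert_eq_cons, ← singleton_add]
      abel
    Reaches _ _ := (flip_snd ..).add (flip_snd ..)
    _ = {(u₁, v, w₁ - w₂), (u₁, v', -(w₁ - w₂))} + {(u₂ + u₁, v, w₂ - w), (u₀ + u₁, v', w₁)} := by
      simp only [insert_eq_cons, ← singleton_add, sub_sub_sub_cancel_right, neg_sub]
      abel
    Reaches _ _ := (reduce_snd_neg ..).add_right _
    _ = _ := by
      simp only [insert_eq_cons, ← singleton_add]
      abel

lemma reduce_row_pair (v₀ v₃ w₃ : K[X]) :
    Reaches {(u, v₀, w₁), (u, v₁, w₂), (u, v₂, w), (u, v₃, w₃), (u', v₀ + v₂, w₂),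
        (u', v₁ + v₃, w)}
      {(u, v₀, w₁ - w), (u, v₁, w₂ - w), (u, v₃, w₃ - w), (u', v₀ + v₂, w₂ - w),
        (u' + u, v₀ + v₂ + (v₁ + v₃), w)} := by
  calc ({(u, v₀, w₁), (u, v₁, w₂), (u, v₂, w), (u, v₃, w₃), (u', v₀ + v₂, w₂),
        (u', v₁ + v₃, w)} : Multiset (Triple K))
    _ = {(u, v₂, w), (u, v₀, w₁)} + {(u', v₁ + v₃, w), (u', v₀ + v₂, w₂)} +
          {(u, v₁, w₂), (u, v₃, w₃)} := by
      simp only [insert_eq_cons, ← singleton_add]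
      abel
    Reaches _ _ := ((flip_fst ..).add (flip_fst ..)).add_right _
    _ = {(u, v₂ + v₀, w), (u, v₁, w₂)} + {(u, v₀, w₁ - w), (u', v₁ + v₃ + (v₀ + v₂), w),
          (u', v₀ + v₂, w₂ - w), (u, v₃, w₃)} := by
      simp only [insert_eq_cons, ← singleton_add]
      abel
    Reaches _ _ := (flip_fst ..).add_right _
    _ = {(u', v₀ + v₂ + (v₁ + v₃), w), (u, v₂ + v₀ + v₁, w)} + {(u, v₀, w₁ - w),
          (u, v₁, w₂ - w), (u', v₀ + v₂, w₂ - w), (u, v₃, w₃)} := by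
      simp only [insert_eq_cons, ← singleton_add, add_comm (v₁ + v₃)]
      abel
    Reaches _ _ := (flip_thd ..).add_right _
    _ = {(u, v₃, w₃), (u, -v₃, w)} + {(u, v₀, w₁ - w), (u, v₁, w₂ - w), (u', v₀ + v₂, w₂ - w),
          (u' + u, v₀ + v₂ + (v₁ + v₃), w)} := by
      rw [show v₂ + v₀ + v₁ - (v₀ + v₂ + (v₁ + v₃)) = -v₃ by ring]
      simp only [insert_eq_cons, ← singleton_add]
      abel
    Reaches _ _ := (reduce_thd_neg ..).add_right _
    _ = _ := by
      simp only [insert_eq_cons, ← singleton_add]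
      abel

end Reaches

section Paths

variable {K : Type} [Field K] (a b c : ℕ → K[X])

/-- The representation `{(aᵢ, bⱼ, cᵢ₊ⱼ) : i ≤ n, j ≤ m}` attached to three sequences of
polynomials; `stdRep K n m` is the case in which all three are the sequence of monomials. -/
noncomputable def convRep (n m : ℕ) : Multiset (Triple K) :=
  ∑ i ∈ Finset.range (n + 1), ∑ j ∈ Finset.range (m + 1), {(a i, b j, c (i + j))}

lemma stdRep_eq_convRep (n m : ℕ) : stdRep K n m = convRep (X ^ ·) (X ^ ·) (X ^ ·) n m := by
  rw [convRep, ← Finset.sum_product', stdRep]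
  exact (Multiset.sum_map_singleton _).symm.trans (congrArg _ (Multiset.map_map _ _ _))

lemma convRep_one_add_two (m : ℕ) :
    convRep a b c 1 (m + 2) = convRep a b c 1 m +
      {(a 0, b (m + 1), c (m + 1)), (a 0, b (m + 2), c (m + 2)), (a 1, b (m + 1), c (m + 2)),
        (a 1, b (m + 2), c (m + 3))} := by
  simp only [convRep, Finset.sum_range_succ _ (m + 1), Finset.sum_range_succ _ (m + 2),
    Finset.sum_range_succ _ 0, Finset.sum_range_succ _ 1, Finset.sum_range_zero, zero_add,
    Nat.add_comm 1, insert_eq_cons, ← singleton_add]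
  abel

lemma exists_reaches_convRep_one :
    ∀ m, ∃ R, Reaches (convRep a b c 1 m) R ∧ Multiset.card R = m + 1 + (m + 2) / 2
  | 0 => ⟨_, .refl _, by simp [convRep]⟩
  | 1 => by
    refine ⟨{(a 0, b 0, c 0 - c 1), (a 1, b 1, c 2 - c 1), (a 0 + a 1, b 0 + b 1, c 1)}, ?_, rfl⟩
    convert karatsuba (a 0) (a 1) (b 0) (b 1) (c 1) (c 0) (c 2)
    simp only [convRep, Finset.sum_range_succ, Finset.sum_range_zero,
      insert_eq_cons, ← singleton_add, zero_add, Nat.reduceAdd]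
    abel
  | m + 2 => by
    obtain ⟨R, hR, hcard⟩ := exists_reaches_convRep_one m
    rw [convRep_one_add_two]
    refine ⟨_, hR.add (karatsuba ..), ?_⟩
    simp only [Multiset.card_add, hcard, insert_eq_cons, Multiset.card_cons,
      Multiset.card_singleton]
    omega

lemma reaches_convRep_two_two :
    Reaches (convRep a b c 2 2)
      {(a 0, b 0, c 0 - c 1 - c 2), (a 1, b 1, c 2 - c 1 - c 3), (a 2, b 2, c 4 - c 2 - c 3),
        (a 0 + a 1, b 0 + b 1, c 1), (a 0 + a 2, b 0 + b 2, c 2),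
        (a 1 + a 2, b 1 + b 2, c 3)} := by
  calc convRep a b c 2 2
    _ = {(a 0, b 0, c 0), (a 0, b 1, c 1), (a 1, b 0, c 1), (a 1, b 1, c 2)} +
          ({(a 0, b 2, c 2), (a 2, b 0, c 2), (a 2, b 2, c 4)} +
            {(a 1, b 2, c 3), (a 2, b 1, c 3)}) := by
      simp only [convRep, Finset.sum_range_succ, Finset.sum_range_zero, insert_eq_cons,
        ← singleton_add, zero_add, add_zero, Nat.reduceAdd]
      abel
    Reaches _ _ := (karatsuba ..).add_right _
    _ = {(a 0, b 0, c 0 - c 1), (a 0, b 2, c 2), (a 2, b 0, c 2), (a 2, b 2, c 4)} +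
          ({(a 1, b 1, c 2 - c 1), (a 0 + a 1, b 0 + b 1, c 1)} +
            {(a 1, b 2, c 3), (a 2, b 1, c 3)}) := by
      simp only [insert_eq_cons, ← singleton_add]
      abel
    Reaches _ _ := (karatsuba ..).add_right _
    _ = {(a 1, b 1, c 2 - c 1), (a 1, b 2, c 3), (a 2, b 1, c 3), (a 2, b 2, c 4 - c 2)} +
          {(a 0, b 0, c 0 - c 1 - c 2), (a 0 + a 1, b 0 + b 1, c 1),
            (a 0 + a 2, b 0 + b 2, c 2)} := by
      simp only [insert_eq_cons, ← singleton_add]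
      abel
    Reaches _ _ := (karatsuba ..).add_right _
    _ = _ := by
      simp only [insert_eq_cons, ← singleton_add]
      abel

lemma reaches_convRep_two_three :
    Reaches (convRep a b c 2 3)
      {(a 0, b 0, c 0 - c 1 - (c 2 - c 3)), (a 1, b 1, c 2 - c 1),
        (a 0 + a 1, b 0 + b 1, c 1 - c 3), (a 1, b 3, c 4 - c 3),
        (a 2, b 2, c 4 - c 5 - (c 2 - c 3)), (a 2, b 2 + b 3, c 5 - c 3),
        (a 0 + a 2, b 0 + b 2, c 2 - c 3),
        (a 0 + a 1 + a 2, b 0 + b 1 + (b 2 + b 3), c 3)} := by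
  calc convRep a b c 2 3
    _ = {(a 0, b 0, c 0), (a 0, b 1, c 1), (a 1, b 0, c 1), (a 1, b 1, c 2)} +
          {(a 0, b 2, c 2), (a 0, b 3, c 3), (a 1, b 2, c 3), (a 1, b 3, c 4)} +
          {(a 2, b 1, c 3), (a 2, b 0, c 2)} + {(a 2, b 3, c 5), (a 2, b 2, c 4)} := by
      simp only [convRep, Finset.sum_range_succ, Finset.sum_range_zero, insert_eq_cons,
        ← singleton_add, zero_add, add_zero, Nat.reduceAdd]
      abel
    Reaches _ _ :=
      (((karatsuba ..).add (karatsuba ..)).add (flip_fst ..)).add (flip_fst ..)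
    _ = {(a 0, b 0, c 0 - c 1), (a 0, b 2, c 2 - c 3), (a 2, b 0, c 2 - c 3),
            (a 2, b 2, c 4 - c 5)} +
          {(a 0 + a 1, b 0 + b 1, c 1), (a 0 + a 1, b 2 + b 3, c 3), (a 2, b 0 + b 1, c 3),
            (a 2, b 2 + b 3, c 5)} +
          {(a 1, b 1, c 2 - c 1), (a 1, b 3, c 4 - c 3)} := by
      simp only [insert_eq_cons, ← singleton_add, add_comm (b 1), add_comm (b 3)]
      abel
    Reaches _ _ := ((karatsuba ..).add (karatsuba ..)).add_right _
    _ = _ := by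
      simp only [insert_eq_cons, ← singleton_add]
      abel

lemma reaches_convRep_three_three :
    Reaches (convRep a b c 3 3)
      {(a 0, b 0, c 0 - c 1 - (c 2 - c 3)), (a 1, b 1, c 2 - c 1 - (c 4 - c 3)),
        (a 0 + a 1, b 0 + b 1, c 1 - c 3), (a 2, b 2, c 4 - c 5 - (c 2 - c 3)),
        (a 3, b 3, c 6 - c 5 - (c 4 - c 3)), (a 2 + a 3, b 2 + b 3, c 5 - c 3),
        (a 0 + a 2, b 0 + b 2, c 2 - c 3), (a 1 + a 3, b 1 + b 3, c 4 - c 3),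
        (a 0 + a 1 + (a 2 + a 3), b 0 + b 1 + (b 2 + b 3), c 3)} := by
  calc convRep a b c 3 3
    _ = {(a 0, b 0, c 0), (a 0, b 1, c 1), (a 1, b 0, c 1), (a 1, b 1, c 2)} +
          {(a 0, b 2, c 2), (a 0, b 3, c 3), (a 1, b 2, c 3), (a 1, b 3, c 4)} +
          {(a 2, b 0, c 2), (a 2, b 1, c 3), (a 3, b 0, c 3), (a 3, b 1, c 4)} +
          {(a 2, b 2, c 4), (a 2, b 3, c 5), (a 3, b 2, c 5), (a 3, b 3, c 6)} := by
      simp only [convRep, Finset.sum_range_succ, Finset.sum_range_zero, insert_eq_cons,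
        ← singleton_add, zero_add, add_zero, Nat.reduceAdd]
      abel
    Reaches _ _ :=
      (((karatsuba ..).add (karatsuba ..)).add (karatsuba ..)).add (karatsuba ..)
    _ = {(a 0, b 0, c 0 - c 1), (a 0, b 2, c 2 - c 3), (a 2, b 0, c 2 - c 3),
            (a 2, b 2, c 4 - c 5)} +
          {(a 1, b 1, c 2 - c 1), (a 1, b 3, c 4 - c 3), (a 3, b 1, c 4 - c 3),
            (a 3, b 3, c 6 - c 5)} +
          {(a 0 + a 1, b 0 + b 1, c 1), (a 0 + a 1, b 2 + b 3, c 3), (a 2 + a 3, b 0 + b 1, c 3),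
            (a 2 + a 3, b 2 + b 3, c 5)} := by
      simp only [insert_eq_cons, ← singleton_add]
      abel
    Reaches _ _ := ((karatsuba ..).add (karatsuba ..)).add (karatsuba ..)
    _ = _ := by
      simp only [insert_eq_cons, ← singleton_add]
      abel

lemma reaches_convRep_two_four :
    Reaches (convRep a b c 2 4)
      {(a 0, b 0, c 0 - c 2 - (c 1 - c 3)), (a 1, b 1, c 2 - c 3 - (c 1 - c 3)),
        (a 0 + a 1, b 0 + b 1, c 1 - c 3), (a 2, b 2, c 4 - c 2), (a 2, b 4, c 6),
        (a 0 + a 2, b 0 + b 2, c 2 - c 3), (a 0 + a 2 + a 1, b 0 + b 2 + (b 1 + b 3), c 3),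
        (a 2 + a 1, b 3, c 5 - c 3), (a 1, b 3 - b 4, c 4 - c 5), (a 0 + a 1, b 4, c 4)} := by
  calc convRep a b c 2 4
    _ = {(a 0, b 1, c 1), (a 0, b 3, c 3), (a 2, b 1, c 3), (a 2, b 3, c 5)} +
          {(a 0, b 0, c 0), (a 0, b 2, c 2), (a 2, b 0, c 2), (a 2, b 2, c 4)} +
          {(a 1, b 0, c 1), (a 1, b 1, c 2), (a 1, b 2, c 3), (a 1, b 3, c 4), (a 0, b 4, c 4),
            (a 1, b 4, c 5), (a 2, b 4, c 6)} := by
      simp only [convRep, Finset.sum_range_succ, Finset.sum_range_zero, insert_eq_cons,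
        ← singleton_add, zero_add, add_zero, Nat.reduceAdd]
      abel
    Reaches _ _ := ((karatsuba ..).add (karatsuba ..)).add_right _
    _ = {(a 1, b 0, c 1), (a 1, b 1, c 2), (a 1, b 2, c 3), (a 1, b 3, c 4),
            (a 0 + a 2, b 0 + b 2, c 2), (a 0 + a 2, b 1 + b 3, c 3)} +
          {(a 0, b 0, c 0 - c 2), (a 0, b 1, c 1 - c 3), (a 2, b 2, c 4 - c 2),
            (a 2, b 3, c 5 - c 3), (a 0, b 4, c 4), (a 1, b 4, c 5), (a 2, b 4, c 6)} := by
      simp only [insert_eq_cons, ← singleton_add]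
      abel
    Reaches _ _ := (reduce_row_pair ..).add_right _
    _ = {(a 0, b 0, c 0 - c 2), (a 0, b 1, c 1 - c 3), (a 1, b 0, c 1 - c 3),
            (a 1, b 1, c 2 - c 3)} +
          {(a 0, b 4, c 4), (a 1, b 4, c 5), (a 1, b 3, c 4 - c 3), (a 2, b 3, c 5 - c 3)} +
          {(a 2, b 2, c 4 - c 2), (a 2, b 4, c 6), (a 0 + a 2, b 0 + b 2, c 2 - c 3),
            (a 0 + a 2 + a 1, b 0 + b 2 + (b 1 + b 3), c 3)} := by
      simp only [insert_eq_cons, ← singleton_add]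
      abel
    Reaches _ _ := ((karatsuba ..).add (reduce_column_pair ..)).add_right _
    _ = _ := by
      simp only [insert_eq_cons, ← singleton_add]
      abel

end Paths

section Coefficients

variable {R : Type*} {n : ℕ}

lemma mem_degreeLT_succ_iff [Semiring R] {p : R[X]} :
    p ∈ degreeLT R (n + 1) ↔ p.natDegree ≤ n := by
  rw [degreeLT_succ_eq_degreeLE, mem_degreeLE, natDegree_le_iff_degree_le]

lemma finrank_degreeLT [Ring R] [StrongRankCondition R] (n : ℕ) :
    Module.finrank R (degreeLT R n) = n := by
  simpa only [Module.finrank_fin_fun] using (degreeLTEquiv R n).finrank_eq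

section Truncation

variable [CommRing R]

/-- The truncation of a polynomial to its terms of degree at most `n`. -/
noncomputable def truncateLE (n : ℕ) : R[X] →ₗ[R] R[X] :=
  modByMonicHom (X ^ (n + 1))

lemma degree_truncateLE_le [Nontrivial R] (n : ℕ) (p : R[X]) : (truncateLE n p).degree ≤ n := by
  have h := degree_modByMonic_lt p (monic_X_pow (n + 1))
  rw [degree_X_pow] at h
  exact Order.le_of_lt_succ h

lemma truncateLE_X_pow [Nontrivial R] {i : ℕ} (hi : i ≤ n) :
    truncateLE n (X ^ i : R[X]) = X ^ i := by
  refine modByMonic_eq_self_iff (monic_X_pow _) |>.mpr ?_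
  rw [degree_X_pow, degree_X_pow]
  exact_mod_cast Nat.lt_succ_of_le hi

end Truncation

section Pairing

variable [CommSemiring R]

/-- The symmetric pairing `∑ i ≤ n, pᵢ fᵢ` of coefficients, through which a polynomial of degree
at most `n` acts as a linear form. -/
noncomputable def coeffPairing (n : ℕ) (p : R[X]) : R[X] →ₗ[R] R :=
  ∑ i ∈ Finset.range (n + 1), p.coeff i • lcoeff R i

lemma coeffPairing_apply (n : ℕ) (p f : R[X]) :
    coeffPairing n p f = ∑ i ∈ Finset.range (n + 1), p.coeff i * f.coeff i := by
  simp only [coeffPairing, LinearMap.sum_apply, LinearMap.smul_apply, lcoeff_apply, smul_eq_mul]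

lemma coeffPairing_comm (n : ℕ) (p f : R[X]) : coeffPairing n p f = coeffPairing n f p := by
  simp only [coeffPairing_apply, mul_comm]

lemma coeffPairing_X_pow (p : R[X]) {i : ℕ} (hi : i ∈ Finset.range (n + 1)) :
    coeffPairing n p (X ^ i) = p.coeff i := by
  simp only [coeffPairing_apply, coeff_X_pow, mul_ite, mul_one, mul_zero]
  rw [Finset.sum_ite_eq' (Finset.range (n + 1)) i, if_pos hi]

lemma sum_coeffPairing_smul {p : R[X]} (hp : p ∈ degreeLT R (n + 1)) :
    ∑ i ∈ Finset.range (n + 1), coeffPairing n p (X ^ i) • (X : R[X]) ^ i = p := by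
  conv_rhs => rw [as_sum_range_C_mul_X_pow' p (Nat.lt_succ_of_le (mem_degreeLT_succ_iff.mp hp))]
  exact Finset.sum_congr rfl fun i hi => by rw [coeffPairing_X_pow p hi, smul_eq_C_mul]

end Pairing

end Coefficients

section Rank

variable {K : Type} [Field K] {S : Multiset (Triple K)} {n m : ℕ}

/-- `HasDecomposition K n m r` means that `T_{n,m}` is a sum of `r` rank-one tensors which obey
the degree bounds; `polyMulRank K n m` is the least such `r`. -/
def HasDecomposition (K : Type) [Field K] (n m r : ℕ) : Prop :=
  ∃ u v w : Fin r → K[X],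
    (∀ l, (u l).degree ≤ n) ∧ (∀ l, (v l).degree ≤ m) ∧ (∀ l, (w l).degree ≤ (n + m : ℕ)) ∧
    ∑ l, (u l) ⊗ₜ[K] ((v l) ⊗ₜ[K] (w l)) =
      ∑ i ∈ Finset.range (n + 1), ∑ j ∈ Finset.range (m + 1),
        ((X : K[X]) ^ i) ⊗ₜ[K] (((X : K[X]) ^ j) ⊗ₜ[K] ((X : K[X]) ^ (i + j)))

lemma polyMulRank_eq_sInf (K : Type) [Field K] (n m : ℕ) :
    polyMulRank K n m = sInf {r | HasDecomposition K n m r} :=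
  rfl

lemma tensorOfRep_stdRep (n m : ℕ) :
    tensorOfRep K (stdRep K n m) = ∑ i ∈ Finset.range (n + 1), ∑ j ∈ Finset.range (m + 1),
      ((X : K[X]) ^ i) ⊗ₜ[K] (((X : K[X]) ^ j) ⊗ₜ[K] ((X : K[X]) ^ (i + j))) := by
  rw [← Finset.sum_product', tensorOfRep, stdRep, Multiset.map_map]
  rfl

lemma hasDecomposition_card (hS : tensorOfRep K S = tensorOfRep K (stdRep K n m)) :
    HasDecomposition K n m (Multiset.card S) := by
  obtain ⟨L, rfl⟩ := Quot.exists_rep S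
  refine ⟨fun l => truncateLE n (L.get l).1, fun l => truncateLE m (L.get l).2.1,
    fun l => truncateLE (n + m) (L.get l).2.2, fun l => degree_truncateLE_le _ _,
    fun l => degree_truncateLE_le _ _, fun l => degree_truncateLE_le _ _, ?_⟩
  have hL : ∑ l, tensorOf K (L.get l) = tensorOfRep K (stdRep K n m) := by
    rw [← hS]
    exact Fin.sum_univ_fun_getElem L (tensorOf K)
  have htrunc := congrArg (TensorProduct.map (truncateLE n)
    (TensorProduct.map (truncateLE m) (truncateLE (n + m)))) hL
  simp only [tensorOfRep_stdRep, tensorOf, map_sum, TensorProduct.map_tmul] at htrunc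
  refine htrunc.trans (Finset.sum_congr rfl fun i hi => Finset.sum_congr rfl fun j hj => ?_)
  have hi' := Finset.mem_range_succ_iff.mp hi
  have hj' := Finset.mem_range_succ_iff.mp hj
  rw [truncateLE_X_pow hi', truncateLE_X_pow hj', truncateLE_X_pow (add_le_add hi' hj')]

end Rank

section BilinearAlgorithm

variable {K : Type*} [Field K] {n m r : ℕ}

/-- A bilinear algorithm with `r` multiplications for the product of a polynomial of degree at
most `n` and a polynomial of degree at most `m`. -/
structure BilinearAlgorithm (K : Type*) [Field K] (n m r : ℕ) where
  left : Fin r → K[X] →ₗ[K] K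
  right : Fin r → K[X] →ₗ[K] K
  out : Fin r → K[X]
  mul_eq : ∀ p ∈ degreeLT K (n + 1), ∀ q ∈ degreeLT K (m + 1),
    p * q = ∑ l, left l p • right l q • out l

namespace BilinearAlgorithm

lemma nonempty_of_hasDecomposition {K : Type} [Field K] (h : HasDecomposition K n m r) :
    Nonempty (BilinearAlgorithm K n m r) := by
  obtain ⟨u, v, w, -, -, -, h⟩ := h
  refine ⟨⟨fun l => coeffPairing n (u l), fun l => coeffPairing m (v l), w, fun p hp q hq => ?_⟩⟩
  have hcontract := congrArg ((TensorProduct.lid K K[X]).toLinearMap ∘ₗ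
    TensorProduct.map (coeffPairing n p) ((TensorProduct.lid K K[X]).toLinearMap ∘ₗ
      TensorProduct.map (coeffPairing m q) LinearMap.id)) h
  simp only [map_sum, LinearMap.comp_apply, LinearEquiv.coe_coe, TensorProduct.map_tmul,
    TensorProduct.lid_tmul, LinearMap.id_apply] at hcontract
  simp_rw [coeffPairing_comm n _ p, coeffPairing_comm m _ q]
  rw [hcontract]
  conv_lhs => rw [← sum_coeffPairing_smul hp, ← sum_coeffPairing_smul hq, Finset.sum_mul_sum]
  simp only [smul_mul_smul_comm, smul_smul, pow_add]

/-- The codeword of the values `left l p`. The words of the nonzero polynomials of degree at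
most `n` have weight greater than `m`, so that the length `r` is subject to the bounds of coding
theory. -/
noncomputable def word (B : BilinearAlgorithm K n m r) : K[X] →ₗ[K] (Fin r → K) :=
  LinearMap.pi B.left

variable (B : BilinearAlgorithm K n m r) {p : K[X]}

/-- The right linear forms of the products in which `p` takes part. -/
noncomputable def rightOn (p : K[X]) :
    degreeLT K (m + 1) →ₗ[K] ({l // B.word p l ≠ 0} → K) :=
  LinearMap.pi fun l => B.right l ∘ₗ (degreeLT K (m + 1)).subtype

lemma mul_eq_sum_rightOn [DecidableEq K] (hp : p ∈ degreeLT K (n + 1)) (q : degreeLT K (m + 1)) :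
    p * q = ∑ l : {l // B.word p l ≠ 0}, B.word p l • B.rightOn p q l • B.out l := by
  rw [B.mul_eq p hp q q.2]
  change ∑ l, B.word p l • B.right l q • B.out l =
    ∑ l : {l // B.word p l ≠ 0}, B.word p l • B.right l q • B.out l
  rw [← Finset.sum_subtype {l | B.word p l ≠ 0} (by simp)
    fun l => B.word p l • B.right l (q : K[X]) • B.out l]
  exact (Finset.sum_filter_of_ne fun l _ => left_ne_zero_of_smul).symm

lemma rightOn_injective (hp : p ∈ degreeLT K (n + 1)) (hp0 : p ≠ 0) :
    Function.Injective (B.rightOn p) := by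
  classical
  refine (injective_iff_map_eq_zero _).mpr fun q hq => ?_
  simpa [hq, hp0] using B.mul_eq_sum_rightOn hp q

variable [DecidableEq K]

lemma finrank_rightOn_codomain (p : K[X]) :
    Module.finrank K ({l // B.word p l ≠ 0} → K) = hammingNorm (B.word p) := by
  rw [Module.finrank_fintype_fun_eq_card, Fintype.card_subtype]
  rfl

lemma lt_hammingNorm_word (hp : p ∈ degreeLT K (n + 1)) (hp0 : p ≠ 0) :
    m < hammingNorm (B.word p) := by
  have h := LinearMap.finrank_le_finrank_of_injective (B.rightOn_injective hp hp0)
  rwa [finrank_degreeLT, finrank_rightOn_codomain] at h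

/-- A word of least weight leaves no freedom to the right forms in its support, so that each of
the corresponding outputs is itself a product with `p`. -/
lemma exists_out_eq_mul (hp : p ∈ degreeLT K (n + 1)) (hp0 : p ≠ 0)
    (hw : hammingNorm (B.word p) ≤ m + 1) {l : Fin r} (hl : B.word p l ≠ 0) :
    ∃ q ∈ degreeLT K (m + 1), q ≠ 0 ∧ B.out l = p * q := by
  have : FiniteDimensional K (degreeLT K (m + 1)) :=
    (degreeLTEquiv K (m + 1)).symm.finiteDimensional
  have hsurj : Function.Surjective (B.rightOn p) := by
    refine (LinearMap.injective_iff_surjective_of_finrank_eq_finrank ?_).mp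
      (B.rightOn_injective hp hp0)
    rw [finrank_degreeLT, finrank_rightOn_codomain]
    exact (Nat.succ_le_of_lt (B.lt_hammingNorm_word hp hp0)).antisymm hw
  obtain ⟨q, hq⟩ := hsurj (Pi.single ⟨l, hl⟩ (B.word p l)⁻¹)
  refine ⟨q, q.2, fun hq0 => ?_, ?_⟩
  · rw [ZeroMemClass.coe_eq_zero.mp hq0, map_zero] at hq
    exact hl (by simpa [eq_comm] using congrFun hq ⟨l, hl⟩)
  · rw [B.mul_eq_sum_rightOn hp q, hq, Finset.sum_eq_single ⟨l, hl⟩]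
    · simp [smul_smul, hl]
    · intro l' _ hne
      simp [hne]
    · simp

lemma natDegree_add_le_of_isCoprime {P Q S : K[X]} {l : Fin r}
    (hP : P ∈ degreeLT K (n + 1)) (hQ : Q ∈ degreeLT K (n + 1)) (hS : S ∈ degreeLT K (n + 1))
    (hPw : hammingNorm (B.word P) ≤ m + 1) (hQw : hammingNorm (B.word Q) ≤ m + 1)
    (hSw : hammingNorm (B.word S) ≤ m + 1)
    (hPl : B.word P l ≠ 0) (hQl : B.word Q l ≠ 0) (hSl : B.word S l ≠ 0)
    (hPQ : IsCoprime P Q) (hPS : IsCoprime P S) (hQS : IsCoprime Q S) :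
    Q.natDegree + S.natDegree ≤ m := by
  have ne_zero {T : K[X]} (hT : B.word T l ≠ 0) : T ≠ 0 := by
    rintro rfl
    exact hT (by rw [map_zero]; rfl)
  obtain ⟨p, hpd, hp0, hp⟩ := B.exists_out_eq_mul hP (ne_zero hPl) hPw hPl
  obtain ⟨q, -, -, hq⟩ := B.exists_out_eq_mul hQ (ne_zero hQl) hQw hQl
  obtain ⟨s, -, -, hs⟩ := B.exists_out_eq_mul hS (ne_zero hSl) hSw hSl
  have hdvd : Q * S ∣ p := hQS.mul_dvd (hPQ.symm.dvd_of_dvd_mul_left ⟨q, hp.symm.trans hq⟩)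
    (hPS.symm.dvd_of_dvd_mul_left ⟨s, hp.symm.trans hs⟩)
  rw [← natDegree_mul (ne_zero hQl) (ne_zero hSl)]
  exact (natDegree_le_of_dvd hdvd hp0).trans (mem_degreeLT_succ_iff.mp hpd)

end BilinearAlgorithm

end BilinearAlgorithm

theorem exists_path_card_eq_polyMulRank {K : Type} [Field K] {n m : ℕ}
    {R : Multiset (Triple K)}
    (hR : Reaches (convRep (X ^ ·) (X ^ ·) (X ^ ·) n m) R)
    (hlower : ∀ r, BilinearAlgorithm K n m r → Multiset.card R ≤ r) :
    ∃ (R : Multiset (Triple K)) (f r : ℕ),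
      Path K (stdRep K n m) R f r ∧ Multiset.card R = polyMulRank K n m := by
  rw [← stdRep_eq_convRep] at hR
  obtain ⟨f, r, hpath⟩ := hR
  have hdecomp := hasDecomposition_card hpath.tensorOfRep_eq.symm
  refine ⟨R, f, r, hpath, ?_⟩
  rw [polyMulRank_eq_sInf]
  exact le_antisymm
    (le_csInf ⟨_, hdecomp⟩ fun s hs =>
      (BilinearAlgorithm.nonempty_of_hasDecomposition hs).elim (hlower s))
    (Nat.sInf_le hdecomp)

section Griesmer

variable {F ι : Type*} [Field F] [Fintype F] [DecidableEq F] [Fintype ι]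

lemma sum_hammingNorm_sub_smul (x y : ι → F) :
    ∑ c : F, hammingNorm (y - c • x) =
      Fintype.card F * hammingNorm (fun i : {i // x i = 0} => y i) +
        (Fintype.card F - 1) * hammingNorm x := by
  have hcol (i : ι) : ∑ c : F, (if (y - c • x) i ≠ 0 then 1 else 0) =
      if x i = 0 then Fintype.card F * (if y i ≠ 0 then 1 else 0) else Fintype.card F - 1 := by
    split_ifs with hx hy
    · simp [hx, hy]
    · simp [hx, not_not.mp hy]
    · rw [← Finset.card_filter]
      have hcompl : ({c | (y - c • x) i ≠ 0} : Finset F) = {y i / x i}ᶜ := by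
        ext c
        simp [sub_eq_zero, eq_div_iff hx, eq_comm]
      rw [hcompl, Finset.card_compl, Finset.card_singleton]
  simp only [hammingNorm, Finset.card_filter]
  rw [Finset.sum_comm, Finset.sum_congr rfl fun i _ => hcol i, Finset.sum_ite, ← Finset.mul_sum,
    Finset.sum_subtype _ (p := fun i => x i = 0) (by simp), Finset.sum_const, smul_eq_mul,
    mul_comm (Finset.card _), Finset.card_filter]

lemma ceilDiv_pow_succ_le (d : ℕ) {q : ℕ} (hq : 0 < q) (i : ℕ) :
    d ⌈/⌉ q ^ (i + 1) ≤ (d ⌈/⌉ q) ⌈/⌉ q ^ i := by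
  rw [ceilDiv_le_iff_le_mul (pow_pos hq _), pow_succ', mul_assoc, ← ceilDiv_le_iff_le_mul hq,
    ← ceilDiv_le_iff_le_mul (pow_pos hq _)]

/-- The residual of the code `C` with respect to the word `x`: its codewords are those of `C`,
restricted to the positions in which `x` vanishes. -/
def residualCode (C : Submodule F (ι → F)) (x : ι → F) : Submodule F ({i // x i = 0} → F) :=
  C.map (LinearMap.funLeft F F Subtype.val)

variable {C : Submodule F (ι → F)} {x y : ι → F}

lemma hammingNorm_le_card_mul_residual (hx : x ∈ C)
    (hmin : ∀ z ∈ C, z ≠ 0 → hammingNorm x ≤ hammingNorm z) (hy : y ∈ C) (hxy : y ∉ F ∙ x) :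
    hammingNorm x ≤ Fintype.card F * hammingNorm (fun i : {i // x i = 0} => y i) := by
  have hle (c : F) : hammingNorm x ≤ hammingNorm (y - c • x) := by
    refine hmin _ (C.sub_mem hy (C.smul_mem c hx)) fun h => hxy ?_
    exact Submodule.mem_span_singleton.mpr ⟨c, (sub_eq_zero.mp h).symm⟩
  have hsum := Finset.card_nsmul_le_sum Finset.univ _ _ fun c _ => hle c
  rw [sum_hammingNorm_sub_smul, Finset.card_univ, smul_eq_mul] at hsum
  obtain ⟨k, hk⟩ := Nat.exists_eq_succ_of_ne_zero (Fintype.card_ne_zero (α := F))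
  rw [hk, Nat.succ_sub_one] at hsum
  rw [hk]
  linarith

lemma finrank_le_finrank_residualCode_add_one {F : Type*} [Field F] [Finite F] [DecidableEq F]
    {C : Submodule F (ι → F)} {x : ι → F} (hx : x ∈ C) (hx0 : x ≠ 0)
    (hmin : ∀ z ∈ C, z ≠ 0 → hammingNorm x ≤ hammingNorm z) :
    Module.finrank F C ≤ Module.finrank F (residualCode C x) + 1 := by
  have := Fintype.ofFinite F
  set restrict := (LinearMap.funLeft F F (Subtype.val : {i // x i = 0} → ι)).domRestrict C
  have hker : LinearMap.ker restrict ≤ F ∙ (⟨x, hx⟩ : C) := by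
    intro y hy
    have hy0 : hammingNorm (fun i : {i // x i = 0} => y.1 i) = 0 := hammingNorm_eq_zero.mpr hy
    have hmem : y.1 ∈ F ∙ x := by
      by_contra hxy
      have h := hammingNorm_le_card_mul_residual hx hmin y.2 hxy
      rw [hy0, mul_zero] at h
      exact hx0 (hammingNorm_eq_zero.mp (Nat.le_zero.mp h))
    obtain ⟨c, hc⟩ := Submodule.mem_span_singleton.mp hmem
    exact Submodule.mem_span_singleton.mpr ⟨c, Subtype.ext hc⟩
  have hline : Module.finrank F (F ∙ (⟨x, hx⟩ : C)) = 1 :=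
    finrank_span_singleton fun h => hx0 (congrArg Subtype.val h)
  rw [← restrict.finrank_range_add_finrank_ker, LinearMap.range_domRestrict, ← hline]
  exact Nat.add_le_add_left (Submodule.finrank_mono hker) _

lemma ceilDiv_le_hammingNorm_residual {d : ℕ} (hd : ∀ z ∈ C, z ≠ 0 → d ≤ hammingNorm z)
    (hx : x ∈ C) (hx0 : x ≠ 0) (hmin : ∀ z ∈ C, z ≠ 0 → hammingNorm x ≤ hammingNorm z) :
    ∀ z ∈ residualCode C x, z ≠ 0 → d ⌈/⌉ Fintype.card F ≤ hammingNorm z := by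
  rintro _ ⟨y, hy, rfl⟩ hy0
  rw [ceilDiv_le_iff_le_mul Fintype.card_pos]
  refine (hd x hx hx0).trans (hammingNorm_le_card_mul_residual hx hmin hy fun hxy => hy0 ?_)
  obtain ⟨c, rfl⟩ := Submodule.mem_span_singleton.mp hxy
  ext i
  simp [LinearMap.funLeft_apply, i.2]

theorem griesmer_bound {d : ℕ} (hd : ∀ z ∈ C, z ≠ 0 → d ≤ hammingNorm z) :
    ∑ i ∈ Finset.range (Module.finrank F C), d ⌈/⌉ Fintype.card F ^ i ≤ Fintype.card ι := by
  suffices h : ∀ k ≤ Module.finrank F C,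
    ∑ i ∈ Finset.range k, d ⌈/⌉ Fintype.card F ^ i ≤ Fintype.card ι from h _ le_rfl
  intro k hk
  induction k generalizing ι d with
  | zero => simp
  | succ k ih =>
    have hC : C ≠ ⊥ := by
      rintro rfl
      simp at hk
    obtain ⟨x, ⟨hx, hx0⟩, hmin⟩ := Set.exists_min_image {x | x ∈ C ∧ x ≠ 0} hammingNorm
      (Set.toFinite _) (C.ne_bot_iff.mp hC)
    replace hmin z (hz : z ∈ C) (hz0 : z ≠ 0) := hmin z ⟨hz, hz0⟩
    have hresidual := ih (ceilDiv_le_hammingNorm_residual hd hx hx0 hmin)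
      (Nat.le_of_succ_le_succ (hk.trans (finrank_le_finrank_residualCode_add_one hx hx0 hmin)))
    calc ∑ i ∈ Finset.range (k + 1), d ⌈/⌉ Fintype.card F ^ i
      _ = ∑ i ∈ Finset.range k, d ⌈/⌉ Fintype.card F ^ (i + 1) + d := by
        rw [Finset.sum_range_succ', pow_zero, ceilDiv_one]
      _ ≤ ∑ i ∈ Finset.range k, (d ⌈/⌉ Fintype.card F) ⌈/⌉ Fintype.card F ^ i + hammingNorm x :=
        add_le_add (Finset.sum_le_sum fun i _ => ceilDiv_pow_succ_le d Fintype.card_pos i)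
          (hd x hx hx0)
      _ ≤ Fintype.card {i // x i = 0} + hammingNorm x := by gcongr
      _ = Fintype.card ι := by
        rw [Fintype.card_subtype]
        exact Finset.card_filter_add_card_filter_not _

end Griesmer

namespace BilinearAlgorithm

variable {K : Type*} [Field K] {n m r : ℕ}

lemma griesmer_le_length [Fintype K] (B : BilinearAlgorithm K n m r) :
    ∑ i ∈ Finset.range (n + 1), (m + 1) ⌈/⌉ Fintype.card K ^ i ≤ r := by
  classical
  have hweight : ∀ z ∈ (degreeLT K (n + 1)).map B.word, z ≠ 0 → m + 1 ≤ hammingNorm z := by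
    rintro _ ⟨p, hp, rfl⟩ hz
    exact B.lt_hammingNorm_word hp (ne_zero_of_map hz)
  have hinj : Function.Injective (B.word.domRestrict (degreeLT K (n + 1))) := by
    refine (injective_iff_map_eq_zero _).mpr fun p hp => ?_
    by_contra hp0
    have h := B.lt_hammingNorm_word p.2 (fun h => hp0 (Subtype.ext h))
    rw [← LinearMap.domRestrict_apply, hp, hammingNorm_zero] at h
    exact Nat.not_lt_zero m h
  have hfinrank : Module.finrank K ((degreeLT K (n + 1)).map B.word) = n + 1 := by
    rw [← LinearMap.range_domRestrict, LinearMap.finrank_range_of_inj hinj, finrank_degreeLT]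
  simpa only [hfinrank, Fintype.card_fin] using griesmer_bound hweight

end BilinearAlgorithm

section Binary

variable {ι : Type*} [Fintype ι]

lemma sum_four_hammingNorm (x y z : ι → ZMod 2) :
    hammingNorm x + hammingNorm y + hammingNorm z + hammingNorm (x + y + z) =
      2 * Finset.card {i | x i ≠ 0 ∨ y i ≠ 0 ∨ z i ≠ 0} +
        2 * Finset.card {i | x i ≠ 0 ∧ y i ≠ 0 ∧ z i ≠ 0} := by
  have hbit : ∀ a b c : ZMod 2, (if a ≠ 0 then 1 else 0) + (if b ≠ 0 then 1 else 0) +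
      (if c ≠ 0 then 1 else 0) + (if a + b + c ≠ 0 then 1 else 0) =
      2 * (if a ≠ 0 ∨ b ≠ 0 ∨ c ≠ 0 then 1 else 0) +
        2 * (if a ≠ 0 ∧ b ≠ 0 ∧ c ≠ 0 then 1 else 0) := by decide
  simp only [hammingNorm, Finset.card_filter, Finset.mul_sum, ← Finset.sum_add_distrib]
  exact Finset.sum_congr rfl fun i _ => hbit (x i) (y i) (z i)

lemma sum_seven_hammingNorm (x y z : ι → ZMod 2) :
    hammingNorm x + hammingNorm y + hammingNorm z + hammingNorm (x + y) + hammingNorm (x + z) +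
        hammingNorm (y + z) + hammingNorm (x + y + z) =
      4 * Finset.card {i | x i ≠ 0 ∨ y i ≠ 0 ∨ z i ≠ 0} := by
  have hbit : ∀ a b c : ZMod 2, (if a ≠ 0 then 1 else 0) + (if b ≠ 0 then 1 else 0) +
      (if c ≠ 0 then 1 else 0) + (if a + b ≠ 0 then 1 else 0) + (if a + c ≠ 0 then 1 else 0) +
      (if b + c ≠ 0 then 1 else 0) + (if a + b + c ≠ 0 then 1 else 0) =
      4 * (if a ≠ 0 ∨ b ≠ 0 ∨ c ≠ 0 then 1 else 0) := by decide
  simp only [hammingNorm, Finset.card_filter, Finset.mul_sum, ← Finset.sum_add_distrib]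
  exact Finset.sum_congr rfl fun i _ => hbit (x i) (y i) (z i)

namespace BilinearAlgorithm

variable {n m r : ℕ}

lemma seven_mul_lt_four_mul_card (B : BilinearAlgorithm (ZMod 2) n m r) {P Q S : (ZMod 2)[X]}
    (hP : P ∈ degreeLT (ZMod 2) (n + 1)) (hQ : Q ∈ degreeLT (ZMod 2) (n + 1))
    (hS : S ∈ degreeLT (ZMod 2) (n + 1)) (hli : LinearIndependent (ZMod 2) ![P, Q, S])
    (hPQ : IsCoprime P Q) (hPS : IsCoprime P S) (hQS : IsCoprime Q S)
    (hdeg : m < Q.natDegree + S.natDegree) :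
    7 * (m + 1) < 4 * Finset.card {l | B.word P l ≠ 0 ∨ B.word Q l ≠ 0 ∨ B.word S l ≠ 0} := by
  have hcomb (a b c : ZMod 2) (h : ![a, b, c] ≠ 0) :
      m + 1 ≤ hammingNorm (a • B.word P + b • B.word Q + c • B.word S) := by
    simp only [← map_smul, ← map_add]
    refine B.lt_hammingNorm_word (add_mem (add_mem (Submodule.smul_mem _ a hP)
      (Submodule.smul_mem _ b hQ)) (Submodule.smul_mem _ c hS)) fun h0 => h (funext ?_)
    exact Fintype.linearIndependent_iff.mp hli _ (by simpa [Fin.sum_univ_three] using h0)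
  have h100 := hcomb 1 0 0 (by decide)
  have h010 := hcomb 0 1 0 (by decide)
  have h001 := hcomb 0 0 1 (by decide)
  have h110 := hcomb 1 1 0 (by decide)
  have h101 := hcomb 1 0 1 (by decide)
  have h011 := hcomb 0 1 1 (by decide)
  have h111 := hcomb 1 1 1 (by decide)
  simp only [one_smul, zero_smul, add_zero, zero_add] at h100 h010 h001 h110 h101 h011 h111
  have hfour := sum_four_hammingNorm (B.word P) (B.word Q) (B.word S)
  have hseven := sum_seven_hammingNorm (B.word P) (B.word Q) (B.word S)
  by_contra! hle
  have hcommon : 0 < Finset.card {l | B.word P l ≠ 0 ∧ B.word Q l ≠ 0 ∧ B.word S l ≠ 0} := by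
    omega
  obtain ⟨l, hl⟩ := Finset.card_pos.mp hcommon
  obtain ⟨hPl, hQl, hSl⟩ := (Finset.mem_filter.mp hl).2
  exact hdeg.not_ge (B.natDegree_add_le_of_isCoprime hP hQ hS (by omega) (by omega) (by omega)
    hPl hQl hSl hPQ hPS hQS)

lemma eight_le_length_two_three (B : BilinearAlgorithm (ZMod 2) 2 3 r) : 8 ≤ r := by
  have hdeg : (X ^ 2 + X + 1 : (ZMod 2)[X]).natDegree = 2 := by compute_degree!
  have hli : LinearIndependent (ZMod 2) ![1, X ^ 2, (X ^ 2 + X + 1 : (ZMod 2)[X])] := by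
    rw [Fintype.linearIndependent_iff]
    intro g hg
    have h1 : g 2 = 0 := by
      simpa [Fin.sum_univ_three, coeff_X, coeff_one] using congrArg (coeff · 1) hg
    have h0 : g 0 = 0 := by
      simpa [Fin.sum_univ_three, coeff_X, coeff_one, h1] using congrArg (coeff · 0) hg
    have h2 : g 1 = 0 := by
      simpa [Fin.sum_univ_three, coeff_X, coeff_one, h1] using congrArg (coeff · 2) hg
    exact Fin.forall_fin_succ.mpr ⟨h0, Fin.forall_fin_two.mpr ⟨h2, h1⟩⟩
  have h := B.seven_mul_lt_four_mul_card (P := 1) (Q := X ^ 2) (S := X ^ 2 + X + 1)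
    (mem_degreeLT_succ_iff.mpr (by simp)) (mem_degreeLT_succ_iff.mpr (natDegree_X_pow 2).le)
    (mem_degreeLT_succ_iff.mpr hdeg.le) hli isCoprime_one_left isCoprime_one_left
    (.pow_left ⟨-(X + 1), 1, by ring⟩) (by rw [hdeg, natDegree_X_pow]; norm_num)
  have hcard := Finset.card_le_univ
    {l | B.word 1 l ≠ 0 ∨ B.word (X ^ 2) l ≠ 0 ∨ B.word (X ^ 2 + X + 1) l ≠ 0}
  rw [Fintype.card_fin] at hcard
  omega

end BilinearAlgorithm

end Binary

section CoprimeCubics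

/-- Pairwise coprime polynomials over `ZMod 2` of which all but the first have degree `3`. Any
four of them form a basis of the polynomials of degree at most `3`, and all five add up to zero. -/
noncomputable def coprimeCubics : Fin 5 → (ZMod 2)[X] :=
  ![1, X ^ 3, X ^ 3 + X ^ 2 + X + 1, X ^ 3 + X + 1, X ^ 3 + X ^ 2 + 1]

lemma natDegree_coprimeCubics {i : Fin 5} (hi : i ≠ 0) : (coprimeCubics i).natDegree = 3 := by
  fin_cases i
  · exact absurd rfl hi
  · exact natDegree_X_pow 3
  all_goals
    simp only [coprimeCubics, Fin.reduceFinMk, Matrix.cons_val]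
    compute_degree!

lemma coprimeCubics_mem_degreeLT (i : Fin 5) : coprimeCubics i ∈ degreeLT (ZMod 2) (3 + 1) := by
  rw [mem_degreeLT_succ_iff]
  obtain rfl | hi := eq_or_ne i 0
  · simp [coprimeCubics]
  · exact (natDegree_coprimeCubics hi).le

lemma isCoprime_coprimeCubics {i j : Fin 5} (hij : i < j) :
    IsCoprime (coprimeCubics i) (coprimeCubics j) := by
  have h2 : (2 : (ZMod 2)[X]) = 0 := CharTwo.two_eq_zero
  fin_cases i <;> fin_cases j <;> first | exact absurd hij (by decide) | skip
  all_goals simp only [coprimeCubics, Fin.reduceFinMk, Matrix.cons_val]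
  · exact isCoprime_one_left
  · exact isCoprime_one_left
  · exact isCoprime_one_left
  · exact isCoprime_one_left
  · exact .pow_left ⟨-(X ^ 2 + X + 1), 1, by ring⟩
  · exact .pow_left ⟨-(X ^ 2 + 1), 1, by ring⟩
  · exact .pow_left ⟨-(X ^ 2 + X), 1, by ring⟩
  · exact ⟨X ^ 2 + X + 1, X ^ 2, by
      linear_combination (X ^ 5 + X ^ 4 + 2 * X ^ 3 + 2 * X ^ 2 + X) * h2⟩
  · exact ⟨X ^ 2 + X, X ^ 2 + X + 1, by
      linear_combination (X ^ 5 + 2 * X ^ 4 + 2 * X ^ 3 + 2 * X ^ 2 + X) * h2⟩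
  · exact ⟨X, X + 1, by linear_combination (X ^ 4 + X ^ 3 + X ^ 2 + X) * h2⟩

lemma sum_coprimeCubics : ∑ i, coprimeCubics i = 0 := by
  simp only [coprimeCubics, Fin.sum_univ_five, Matrix.cons_val]
  linear_combination (2 * X ^ 3 + X ^ 2 + X + 2) * CharTwo.two_eq_zero (R := (ZMod 2)[X])

lemma eq_of_sum_smul_coprimeCubics_eq_zero {g : Fin 5 → ZMod 2}
    (hg : ∑ i, g i • coprimeCubics i = 0) (i j : Fin 5) : g i = g j := by
  have h0 : g 0 + g 2 + g 3 + g 4 = 0 := by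
    simpa [coprimeCubics, Fin.sum_univ_five, coeff_X, coeff_one] using congrArg (coeff · 0) hg
  have h1 : g 2 + g 3 = 0 := by
    simpa [coprimeCubics, Fin.sum_univ_five, coeff_X, coeff_one] using congrArg (coeff · 1) hg
  have h2 : g 2 + g 4 = 0 := by
    simpa [coprimeCubics, Fin.sum_univ_five, coeff_X, coeff_one] using congrArg (coeff · 2) hg
  have h3 : g 1 + g 2 + g 3 + g 4 = 0 := by
    simpa [coprimeCubics, Fin.sum_univ_five, coeff_X, coeff_one] using congrArg (coeff · 3) hg
  have hconst : ∀ g : Fin 5 → ZMod 2, g 0 + g 2 + g 3 + g 4 = 0 → g 2 + g 3 = 0 →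
    g 2 + g 4 = 0 → g 1 + g 2 + g 3 + g 4 = 0 → ∀ i j, g i = g j := by decide
  exact hconst g h0 h1 h2 h3 i j

lemma linearIndependent_coprimeCubics {i j k : Fin 5} (hij : i < j) (hjk : j < k) :
    LinearIndependent (ZMod 2) ![coprimeCubics i, coprimeCubics j, coprimeCubics k] := by
  rw [Fintype.linearIndependent_iff]
  intro w hw
  have hconst := eq_of_sum_smul_coprimeCubics_eq_zero
    (g := w 0 • Pi.single i 1 + w 1 • Pi.single j 1 + w 2 • Pi.single k 1) (by
      simpa [add_smul, Finset.sum_add_distrib, Pi.single_apply, Fin.sum_univ_three] using hw)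
  clear hw
  revert i j k w
  decide +kernel

lemma coprimeCubics_injective : Function.Injective coprimeCubics := by
  intro i j hij
  have hconst := eq_of_sum_smul_coprimeCubics_eq_zero
    (g := Pi.single i 1 - Pi.single j 1) (by
      simpa [sub_smul, Pi.single_apply, sub_eq_zero] using hij)
  clear hij
  revert i j
  decide

lemma exists_three_zeros_or_card_le (g : Fin 5 → ZMod 2) (hg : ∑ i, g i = 0) :
    (∃ i j k, i < j ∧ j < k ∧ g i = 0 ∧ g j = 0 ∧ g k = 0) ∨
      Finset.card {p : Fin 5 × Fin 5 | p.1 < p.2 ∧ g p.1 ≠ g p.2} ≤ 4 := by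
  revert g
  decide +kernel

end CoprimeCubics

namespace BilinearAlgorithm

variable {r : ℕ}

lemma ten_le_length_three_three_of_card_le (B : BilinearAlgorithm (ZMod 2) 3 3 r)
    (hcard : ∀ l, Finset.card {p : Fin 5 × Fin 5 | p.1 < p.2 ∧
      B.word (coprimeCubics p.1) l ≠ B.word (coprimeCubics p.2) l} ≤ 4) : 10 ≤ r := by
  have hdist : ∀ p : Fin 5 × Fin 5, p.1 < p.2 →
      4 ≤ hammingDist (B.word (coprimeCubics p.1)) (B.word (coprimeCubics p.2)) := by
    intro p hp
    rw [hammingDist_eq_hammingNorm, neg_add_eq_sub, ← map_sub]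
    exact B.lt_hammingNorm_word
      (sub_mem (coprimeCubics_mem_degreeLT _) (coprimeCubics_mem_degreeLT _))
      (sub_ne_zero.mpr (coprimeCubics_injective.ne hp.ne'))
  have hpairs : Finset.card {p : Fin 5 × Fin 5 | p.1 < p.2} = 10 := by decide
  have hle : 10 * 4 ≤ r * 4 := by
    calc 10 * 4 = ∑ p : Fin 5 × Fin 5 with p.1 < p.2, 4 := by
          rw [Finset.sum_const, hpairs, smul_eq_mul]
      _ ≤ ∑ p : Fin 5 × Fin 5 with p.1 < p.2,
            hammingDist (B.word (coprimeCubics p.1)) (B.word (coprimeCubics p.2)) :=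
          Finset.sum_le_sum fun p hp => hdist p (Finset.mem_filter.mp hp).2
      _ = ∑ l, Finset.card {p : Fin 5 × Fin 5 | p.1 < p.2 ∧
            B.word (coprimeCubics p.1) l ≠ B.word (coprimeCubics p.2) l} := by
          simp only [hammingDist, ← Finset.filter_filter]
          exact Finset.sum_card_bipartiteAbove_eq_sum_card_bipartiteBelow _
      _ ≤ ∑ _l : Fin r, 4 := Finset.sum_le_sum fun l _ => hcard l
      _ = r * 4 := by rw [Finset.sum_const, Finset.card_fin, smul_eq_mul]
  omega

lemma nine_le_length_three_three (B : BilinearAlgorithm (ZMod 2) 3 3 r) : 9 ≤ r := by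
  by_cases h : ∃ l i j k, i < j ∧ j < k ∧ B.word (coprimeCubics i) l = 0 ∧
    B.word (coprimeCubics j) l = 0 ∧ B.word (coprimeCubics k) l = 0
  · obtain ⟨l, i, j, k, hij, hjk, hi, hj, hk⟩ := h
    have hbound := B.seven_mul_lt_four_mul_card (coprimeCubics_mem_degreeLT i)
      (coprimeCubics_mem_degreeLT j) (coprimeCubics_mem_degreeLT k)
      (linearIndependent_coprimeCubics hij hjk) (isCoprime_coprimeCubics hij)
      (isCoprime_coprimeCubics (hij.trans hjk)) (isCoprime_coprimeCubics hjk)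
      (by rw [natDegree_coprimeCubics (Fin.ne_zero_of_lt hij),
        natDegree_coprimeCubics (Fin.ne_zero_of_lt hjk)]; norm_num)
    have hcard := Finset.card_lt_univ_of_notMem (x := l)
      (s := {l | B.word (coprimeCubics i) l ≠ 0 ∨ B.word (coprimeCubics j) l ≠ 0 ∨
        B.word (coprimeCubics k) l ≠ 0}) (by simp [hi, hj, hk])
    rw [Fintype.card_fin] at hcard
    omega
  · refine le_trans (by norm_num) (B.ten_le_length_three_three_of_card_le fun l => ?_)
    refine (exists_three_zeros_or_card_le (fun i => B.word (coprimeCubics i) l) ?_).resolve_left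
      fun hzeros => h ⟨l, hzeros⟩
    simpa [map_sum] using congrFun (congrArg B.word sum_coprimeCubics) l

end BilinearAlgorithm

end FlipGraph

theorem path_to_optimal_rep_zmod_two_general {n m : ℕ}
    (h : n = 1 ∨ (n, m) ∈ ([(2, 2), (2, 3), (2, 4), (3, 3)] : List (ℕ × ℕ))) :
    ∃ (R : Multiset (Triple (ZMod 2))) (f r : ℕ),
      Path (ZMod 2) (stdRep (ZMod 2) n m) R f r ∧
      Multiset.card R = polyMulRank (ZMod 2) n m := by
  simp only [List.mem_cons, Prod.mk.injEq, List.not_mem_nil, or_false] at h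
  obtain rfl | ⟨rfl, rfl⟩ | ⟨rfl, rfl⟩ | ⟨rfl, rfl⟩ | ⟨rfl, rfl⟩ := h
  · obtain ⟨R, hR, hcard⟩ := exists_reaches_convRep_one (K := ZMod 2) (X ^ ·) (X ^ ·) (X ^ ·) m
    refine exists_path_card_eq_polyMulRank hR fun r B => ?_
    have hr : m + 1 + (m + 2) / 2 ≤ r := by
      simpa [Finset.sum_range_succ, Nat.ceilDiv_eq_add_pred_div] using B.griesmer_le_length
    exact hcard.trans_le hr
  · exact exists_path_card_eq_polyMulRank (reaches_convRep_two_two ..)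
      fun r B => B.griesmer_le_length
  · exact exists_path_card_eq_polyMulRank (reaches_convRep_two_three ..)
      fun r B => B.eight_le_length_two_three
  · exact exists_path_card_eq_polyMulRank (reaches_convRep_two_four ..)
      fun r B => B.griesmer_le_length
  · exact exists_path_card_eq_polyMulRank (reaches_convRep_three_three ..)
      fun r B => B.nine_le_length_three_three

/-- Over the field `ℤ/2` with two elements, for every
`(n,m) ∈ {(1,1),(1,2),(1,3),(1,4),(1,5),(2,2),(2,3),(2,4),(3,3)}` the flip graph of the
polynomial multiplication tensor `T_{n,m}` has a path (consisting of flips and reductions)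
from the standard representation to a representation whose length equals the rank of
`T_{n,m}` over `ℤ/2`. -/
theorem path_to_optimal_rep_zmod_two :
    ∀ p : ℕ × ℕ,
      p ∈ ([(1,1),(1,2),(1,3),(1,4),(1,5),(2,2),(2,3),(2,4),(3,3)] : List (ℕ × ℕ)) →
      ∃ (R : Multiset (Triple (ZMod 2))) (f r : ℕ),
        Path (ZMod 2) (stdRep (ZMod 2) p.1 p.2) R f r ∧
        Multiset.card R = polyMulRank (ZMod 2) p.1 p.2 := by
  intro p hp
  exact path_to_optimal_rep_zmod_two_general (by fin_cases hp <;> simp)
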